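/- Let 0 < ε < 1 and run Algorithm 1 with step sizes α = μ = ε and λ_1 = 0. Let P* ∈ P(R) satisfy the per-slot constraints E_{P*}[C(·, b^t)] ≤ v for every t ≥ 0. Then for every integer T ≥ (1/ε)³, the time-averaged regret satisfies (1/T) Σ_{t=1}^{T} ( E_{P^t}[C_R] − E_{P*}[C_R] ) ≤ ε ( (4Θ² + v²)/2 + |R|Θ²/2 + 2Θ + 1 ). -/

import Mathlib

open Finset

/-!
The argument is a drift-plus-penalty analysis. The proximal step minimizes a linear function plus
`(1/(2α))‖· - P^{t-1}‖²`, so strong convexity gives the three-point inequality `three_point`: any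
competitor `Q` exceeds the minimum by at least `(1/(2α))‖Q - P^t‖²`. Apply it with `Q = P*`,
where the constraint term is nonpositive. Squaring the dual update gives
`λ_{t+1}² ≤ λ_t² + 2μ λ_t g_t + μ² g_t²`, where `g_t` is the constraint slack at `P^t`, which
satisfies `g_t² ≤ 4Θ² + v²`. Adding, the potential
`(1/(2ε)) (λ_{t+1}² + ‖P* - P^t‖²)` telescopes and the total regret is at most
`T ε (4Θ² + v²)/2 + ‖P* - P^0‖²/(2ε)`. Two points of the simplex are at squared distance at
most `2`, and `1/(ε T) ≤ ε²` because `T ≥ ε⁻³`.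
-/

lemma nonpos_of_forall_le_mul {A B : ℝ} (hB : 0 ≤ B)
    (h : ∀ s : ℝ, 0 < s → s < 1 → A ≤ s * B) : A ≤ 0 := by
  by_contra! hA
  have hD : 0 < A + B + 1 := by linarith
  have h1 := h (A / (A + B + 1)) (by positivity) (by rw [div_lt_one hD]; linarith)
  rw [div_mul_eq_mul_div, le_div_iff₀ hD] at h1
  nlinarith

/-- Strong convexity at a minimizer `p` of a linear function plus a proximal term: the competitor
`q` exceeds the minimum by at least `k * ‖q - p‖²`. -/
lemma three_point {R : Type*} [Fintype R] (w : R → ℝ) (k : ℝ) (hk : 0 ≤ k)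
    (p p' q : EuclideanSpace ℝ R)
    (hp : (∀ a, 0 ≤ p a) ∧ ∑ a, p a = 1) (hq : (∀ a, 0 ≤ q a) ∧ ∑ a, q a = 1)
    (hmin : ∀ Q : EuclideanSpace ℝ R, ((∀ a, 0 ≤ Q a) ∧ ∑ a, Q a = 1) →
      ∑ a, p a * w a + k * ‖p - p'‖ ^ 2 ≤ ∑ a, Q a * w a + k * ‖Q - p'‖ ^ 2) :
    ∑ a, p a * w a + k * ‖p - p'‖ ^ 2 + k * ‖q - p‖ ^ 2
      ≤ ∑ a, q a * w a + k * ‖q - p'‖ ^ 2 := by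
  rw [← sub_nonpos]
  apply nonpos_of_forall_le_mul (B := k * ‖q - p‖ ^ 2) (by positivity)
  intro s hs0 hs1
  -- Compare `p` with the point `(1 - s) p + s q` of the segment, divide by `s`; the limit `s → 0`
  -- is taken by `nonpos_of_forall_le_mul`.
  have h := hmin ((1 - s) • p + s • q) ⟨fun a => by
      have := hp.1 a
      have := hq.1 a
      have : 0 ≤ 1 - s := by linarith
      simp only [PiLp.add_apply, PiLp.smul_apply, smul_eq_mul]
      positivity, by
      simp only [PiLp.add_apply, PiLp.smul_apply, smul_eq_mul, Finset.sum_add_distrib,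
        ← Finset.mul_sum, hp.2, hq.2]
      ring⟩
  have hlin : ∑ a, ((1 - s) • p + s • q) a * w a
      = (1 - s) * ∑ a, p a * w a + s * ∑ a, q a * w a := by
    simp only [PiLp.add_apply, PiLp.smul_apply, smul_eq_mul, Finset.mul_sum,
      ← Finset.sum_add_distrib]
    exact Finset.sum_congr rfl fun a _ => by ring
  have hnorm : ‖(1 - s) • p + s • q - p'‖ ^ 2
      = (1 - s) * ‖p - p'‖ ^ 2 + s * ‖q - p'‖ ^ 2 - s * (1 - s) * ‖q - p‖ ^ 2 := by
    simp only [EuclideanSpace.real_norm_sq_eq, PiLp.sub_apply, PiLp.add_apply, PiLp.smul_apply,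
      smul_eq_mul, Finset.mul_sum, ← Finset.sum_add_distrib, ← Finset.sum_sub_distrib]
    exact Finset.sum_congr rfl fun a _ => by ring
  rw [hlin, hnorm] at h
  refine le_of_mul_le_mul_left ?_ hs0
  nlinarith

lemma simplex_dist_sq_le {R : Type*} [Fintype R] (p q : EuclideanSpace ℝ R)
    (hp : (∀ a, 0 ≤ p a) ∧ ∑ a, p a = 1) (hq : (∀ a, 0 ≤ q a) ∧ ∑ a, q a = 1) :
    ‖q - p‖ ^ 2 ≤ 2 := by
  have hle : ∀ r : EuclideanSpace ℝ R, ((∀ a, 0 ≤ r a) ∧ ∑ a, r a = 1) → ∀ a, r a ≤ 1 :=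
    fun r hr a => hr.2 ▸ Finset.single_le_sum (fun i _ => hr.1 i) (Finset.mem_univ a)
  rw [EuclideanSpace.real_norm_sq_eq]
  calc ∑ a, (q - p) a ^ 2 ≤ ∑ a, (q a + p a) := by
        refine Finset.sum_le_sum fun a _ => ?_
        rw [PiLp.sub_apply]
        nlinarith [hp.1 a, hq.1 a, hle p hp a, hle q hq a, mul_nonneg (hp.1 a) (hq.1 a)]
    _ = 2 := by rw [Finset.sum_add_distrib, hp.2, hq.2]; norm_num

theorem stmt13
    {R : Type*} [Fintype R] [Nonempty R]
    (CR : R → ℝ) (CV CT : R → R → ℝ) (Θ v α μ : ℝ)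
    (hΘ : 0 < Θ) (hv : 0 < v) (hα : 0 < α) (hμ : 0 < μ)
    (hCR : ∀ a : R, 0 ≤ CR a ∧ CR a ≤ Θ)
    (hCV : ∀ a c : R, 0 ≤ CV a c ∧ CV a c ≤ Θ)
    (hCT : ∀ a c : R, 0 ≤ CT a c ∧ CT a c ≤ Θ)
    (b : ℕ → R) (P : ℕ → EuclideanSpace ℝ R) (lam : ℕ → ℝ)
    (hP0 : (∀ a : R, 0 ≤ P 0 a) ∧ ∑ a : R, P 0 a = 1)
    (hlam1 : lam 1 = 0)
    (hPmem : ∀ t : ℕ, 1 ≤ t → (∀ a : R, 0 ≤ P t a) ∧ ∑ a : R, P t a = 1)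
    (hPmin : ∀ t : ℕ, 1 ≤ t → ∀ Q : EuclideanSpace ℝ R,
      ((∀ a : R, 0 ≤ Q a) ∧ ∑ a : R, Q a = 1) →
      (∑ a : R, P t a * CR a) +
        lam t * ((∑ a : R, P t a * (CV a (b (t-1)) + CT a (b (t-1)))) - v) +
        (1/(2*α)) * ‖P t - P (t-1)‖^2 ≤
      (∑ a : R, Q a * CR a) +
        lam t * ((∑ a : R, Q a * (CV a (b (t-1)) + CT a (b (t-1)))) - v) +
        (1/(2*α)) * ‖Q - P (t-1)‖^2)
    (hlam : ∀ t : ℕ, 1 ≤ t →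
      lam (t+1) = max 0 (lam t + μ * ((∑ a : R, P t a * (CV a (b (t-1)) + CT a (b (t-1)))) - v)))
    (ε : ℝ) (hε0 : 0 < ε) (hε1 : ε < 1) (hαε : α = ε) (hμε : μ = ε)
    (Pstar : EuclideanSpace ℝ R)
    (hPstar : (∀ a : R, 0 ≤ Pstar a) ∧ ∑ a : R, Pstar a = 1)
    (hfeas : ∀ t : ℕ, (∑ a : R, Pstar a * (CV a (b t) + CT a (b t))) ≤ v)
    (T : ℕ) (hT : (1/ε)^3 ≤ (T:ℝ)) :
    (1/(T:ℝ)) * ∑ t ∈ Finset.Icc 1 T,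
        ((∑ a : R, P t a * CR a) - (∑ a : R, Pstar a * CR a)) ≤
      ε * ((4*Θ^2 + v^2)/2 + (Fintype.card R : ℝ) * Θ^2 / 2 + 2*Θ + 1) := by
  subst hαε
  subst hμε
  have hk : (0:ℝ) ≤ 1 / (2 * μ) := by positivity
  set f : EuclideanSpace ℝ R → ℝ := fun Q => ∑ a, Q a * CR a with hf
  set c : ℕ → EuclideanSpace ℝ R → ℝ :=
    fun t Q => ∑ a, Q a * (CV a (b (t-1)) + CT a (b (t-1))) with hc
  have hlam_nonneg : ∀ t, 1 ≤ t → 0 ≤ lam t := by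
    intro t ht
    rcases Nat.exists_eq_add_of_le' ht with ⟨n, rfl⟩
    rcases Nat.eq_zero_or_pos n with rfl | hn
    · simp [hlam1]
    · rw [hlam n hn]; exact le_max_left _ _
  -- One-step bound: regret is at most a constant plus a decrease of the potential.
  have hstep : ∀ t, 1 ≤ t → f (P t) - f Pstar ≤ μ * ((4*Θ^2 + v^2)/2)
      + (1/(2*μ)) * (lam t ^ 2 + ‖Pstar - P (t-1)‖^2)
      - (1/(2*μ)) * (lam (t+1) ^ 2 + ‖Pstar - P t‖^2) := by
    intro t ht
    have hw : ∀ Q : EuclideanSpace ℝ R,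
        ∑ a, Q a * (CR a + lam t * (CV a (b (t-1)) + CT a (b (t-1)))) = f Q + lam t * c t Q := by
      intro Q
      simp only [hf, hc, Finset.mul_sum, ← Finset.sum_add_distrib]
      exact Finset.sum_congr rfl fun a _ => by ring
    have h3 := three_point (fun a => CR a + lam t * (CV a (b (t-1)) + CT a (b (t-1))))
      (1/(2*μ)) hk (P t) (P (t-1)) Pstar (hPmem t ht) hPstar (by
        intro Q hQ
        have := hPmin t ht Q hQ
        simp only [hw]
        simp only [hf, hc]
        linarith)
    simp only [hw] at h3
    have hfs : lam t * (c t Pstar - v) ≤ 0 :=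
      mul_nonpos_of_nonneg_of_nonpos (hlam_nonneg t ht) (sub_nonpos.2 (hfeas (t-1)))
    have hc0 : 0 ≤ c t (P t) := Finset.sum_nonneg fun a _ =>
      mul_nonneg ((hPmem t ht).1 a) (add_nonneg (hCV a _).1 (hCT a _).1)
    have hc1 : c t (P t) ≤ 2 * Θ := by
      calc c t (P t) ≤ ∑ a, P t a * (2 * Θ) := Finset.sum_le_sum fun a _ =>
            mul_le_mul_of_nonneg_left (by linarith [(hCV a (b (t-1))).2, (hCT a (b (t-1))).2])
              ((hPmem t ht).1 a)
        _ = 2 * Θ := by rw [← Finset.sum_mul, (hPmem t ht).2, one_mul]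
    have hg2 : (c t (P t) - v)^2 ≤ 4*Θ^2 + v^2 := by nlinarith [mul_nonneg hc0 hv.le]
    have hl : lam (t+1)^2 ≤ (lam t + μ * (c t (P t) - v))^2 := by
      rw [hlam t ht, sq_le_sq, abs_of_nonneg (le_max_left _ _)]
      exact max_le (abs_nonneg _) (le_abs_self _)
    have hd : (1/(2*μ)) * lam (t+1)^2
        ≤ (1/(2*μ)) * lam t ^2 + lam t * (c t (P t) - v) + μ * ((4*Θ^2 + v^2)/2) := by
      have h5 := mul_le_mul_of_nonneg_left hl hk
      have h6 : (1/(2*μ)) * (lam t + μ * (c t (P t) - v))^2 = (1/(2*μ)) * lam t ^2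
          + lam t * (c t (P t) - v) + μ * ((c t (P t) - v)^2/2) := by
        field_simp
        ring
      nlinarith
    have hn : 0 ≤ (1/(2*μ)) * ‖P t - P (t-1)‖^2 := by positivity
    linarith
  have hsum : ∀ n : ℕ, ∑ t ∈ Finset.Icc 1 n, (f (P t) - f Pstar) ≤ n * (μ * ((4*Θ^2 + v^2)/2))
      + (1/(2*μ)) * ‖Pstar - P 0‖^2 - (1/(2*μ)) * (lam (n+1) ^ 2 + ‖Pstar - P n‖^2) := by
    intro n
    induction n with
    | zero => simp [hlam1]
    | succ n ih =>
      rw [Finset.sum_Icc_succ_top (by omega)]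
      have := hstep (n+1) (by omega)
      simp only [Nat.add_sub_cancel] at this
      push_cast
      linarith
  have hTpos : (0:ℝ) < T := lt_of_lt_of_le (by positivity) hT
  have hD : (1/(2*μ)) * ‖Pstar - P 0‖^2 ≤ T * μ := by
    have h1 := mul_le_mul_of_nonneg_left (simplex_dist_sq_le (P 0) Pstar hP0 hPstar) hk
    have h2 : (1/(2*μ)) * 2 = (1/μ)^3 * (μ * μ) := by field_simp
    have h3 : (1/μ)^3 * (μ * μ) ≤ T * (μ * μ) := mul_le_mul_of_nonneg_right hT (by positivity)
    have h4 : T * (μ * μ) ≤ T * μ :=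
      mul_le_mul_of_nonneg_left (by nlinarith) hTpos.le
    linarith
  have hS := hsum T
  have hlast : 0 ≤ (1/(2*μ)) * (lam (T+1) ^ 2 + ‖Pstar - P T‖^2) := by positivity
  have hextra : 0 ≤ T * (μ * ((Fintype.card R : ℝ) * Θ^2 / 2 + 2*Θ)) := by positivity
  rw [one_div_mul_eq_div, div_le_iff₀ hTpos]
  linarith
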